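/- Let $H$ be a real Hilbert space. For a set-valued operator $A\colon H\rightrightarrows H$ write $\operatorname{gra}A=\{(x,u):u\in Ax\}$, $\operatorname{dom}A=\{x:Ax\neq\emptyset\}$, $\operatorname{zer}A=\{x:0\in Ax\}$, and let $A^{-1}$ be the operator with graph $\{(u,x):u\in Ax\}$. $A$ is monotone if $\langle x-y,u-v\rangle\ge 0$ for all $(x,u),(y,v)\in\operatorname{gra}A$; it is maximally monotone if it is monotone and no monotone operator has a graph properly containing $\operatorname{gra}A$; it is paramonotone if it is monotone and, whenever $(x,u),(y,v)\in\operatorname{gra}A$ satisfy $\langle x-y,u-v\rangle=0$, also $(x,v),(y,u)\in\operatorname{gra}A$. For $\mu>0$ and a nonempty closed convex set $X\subseteq\operatorname{dom}A$ with metric projection $P_X$, $A$ is $\mu$-strongly monotone relative to $X$ if $\langle v-u,y-P_X(y)\rangle\ge\mu\|y-P_X(y)\|^2$ for all $(y,v)\in\operatorname{gra}A$ and all $u\in A(P_X(y))$. For $A$ maximally monotone and $\gamma>0$, $J_{\gamma A}:=(\mathrm{Id}+\gamma A)^{-1}$ is the resolvent, which is single-valued with full domain. A sequence $(s_n)_{n\in\mathbb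 N}$ converges $R$-linearly to $s$ if there are $C\ge 0$ and $r\in(0,1)$ with $\|s_n-s\|\le Cr^n$ for all $n\in\mathbb N$. Let $\Gamma\subseteq(0,\infty)$ be a nonempty closed interval, and let $A_1,A_2\colon H\rightrightarrows H$ be maximally monotone and paramonotone operators with $P:=\operatorname{zer}(A_1+A_2)\neq\emptyset$. Let $D:=\operatorname{zer}(A_1^{-1}-A_2^{-1}\circ(-\mathrm{Id}))$ and let $\mu,\rho>0$. Suppose that $A_1$ or $A_2$ is $\mu$-strongly monotone relative to $P$, and that $A_1^{-1}$ is $\rho$-strongly monotone relative to $D$ or $A_2^{-1}$ is $\rho$-strongly monotone relative to $-D$. Let $(\gamma_n)_{n\in\mathbb N}\subseteq\Gamma$ converge $R$-linearly to $\gamma^*\in\Gamma$, and let $T_\gamma:=\mathrm{Id}-J_{\gamma A_1}+J_{\gamma A_2}\circ(2J_{\gamma A_1}-\mathrm{Id})$. Given $x_0\in H$, set $z_0=J_{\gamma_0A_1}x_0$ and for each $n\in\mathbb N$ define $$y_n=J_{\gamma_nA_2}(2z_n-x_n),\quad w_n=x_n-z_n+y_n,\quad z_{n+1}=J_{\gamma_nA_1}w_n,\quad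 x_{n+1}=\tfrac{\gamma_{n+1}}{\gamma_n}w_n+\Bigl(1-\tfrac{\gamma_{n+1}}{\gamma_n}\Bigr)z_{n+1}.$$ Then: (i) $(x_n)$ and $(w_n)$ converge $R$-linearly to the same point $x\in\operatorname{Fix}T_{\gamma^*}:=\{x:T_{\gamma^*}x=x\}$; (ii) $(z_n)$ and $(y_n)$ converge $R$-linearly to the same point $z:=J_{\gamma^*A_1}x$, and $z\in P$; (iii) the sequences $\bigl(\tfrac{x_n-z_n}{\gamma_n}\bigr)$ and $\bigl(\tfrac{w_n-y_n}{\gamma_n}\bigr)$ converge $R$-linearly to the point $g:=\tfrac{x-z}{\gamma^*}$, and $g\in D$. -/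

import Mathlib

open scoped Pointwise RealInnerProductSpace

namespace MonOp

/-- The graph of a set-valued operator. -/
def gra {H : Type*} (A : H → Set H) : Set (H × H) := {p | p.2 ∈ A p.1}

/-- The domain of a set-valued operator. -/
def dom {H : Type*} (A : H → Set H) : Set H := {x | (A x).Nonempty}

/-- The zeros of a set-valued operator. -/
def zer {H : Type*} [Zero H] (A : H → Set H) : Set H := {x | (0 : H) ∈ A x}

/-- The inverse of a set-valued operator. -/
def inv {H : Type*} (A : H → Set H) : H → Set H := fun u => {x | u ∈ A x}

section Hilbert

variable {H : Type*} [NormedAddCommGroup H] [InnerProductSpace ℝ H]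

/-- A set-valued operator is monotone. -/
def IsMonotone (A : H → Set H) : Prop :=
  ∀ ⦃x u y v : H⦄, (x, u) ∈ gra A → (y, v) ∈ gra A → 0 ≤ ⟪x - y, u - v⟫

/-- A set-valued operator is maximally monotone: it is monotone, and no monotone operator has
a graph properly containing its graph. -/
def IsMaximallyMonotone (A : H → Set H) : Prop :=
  IsMonotone A ∧ ∀ B : H → Set H, IsMonotone B → gra A ⊆ gra B → gra B = gra A

/-- A set-valued operator is paramonotone. -/
def IsParamonotone (A : H → Set H) : Prop :=
  IsMonotone A ∧ ∀ ⦃x u y v : H⦄, (x, u) ∈ gra A → (y, v) ∈ gra A → ⟪x - y, u - v⟫ = 0 →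
    (x, v) ∈ gra A ∧ (y, u) ∈ gra A

/-- `p` is a metric projection of `y` onto `X`. -/
def IsProj (X : Set H) (y p : H) : Prop := p ∈ X ∧ ∀ q ∈ X, ‖y - p‖ ≤ ‖y - q‖

/-- `A` is `μ`-strongly monotone relative to the nonempty closed convex set `X ⊆ dom A`. In a
Hilbert space the point `p` with `IsProj X y p` exists and is unique; it is `P_X y`. -/
structure IsStronglyMonotoneRel (A : H → Set H) (μ : ℝ) (X : Set H) : Prop where
  pos : 0 < μ
  nonempty : X.Nonempty
  closed : IsClosed X
  convex : Convex ℝ X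
  subset_dom : X ⊆ dom A
  le_inner : ∀ ⦃y v p u : H⦄, (y, v) ∈ gra A → IsProj X y p → u ∈ A p →
    μ * ‖y - p‖ ^ 2 ≤ ⟪v - u, y - p⟫

/-- The resolvent `J_A = (Id + A)⁻¹` as a map `H → H`: the value at `x` is a chosen element of
the set `(Id + A)⁻¹ x`. For a maximally monotone `A` on a Hilbert space that set is always a
singleton. -/
noncomputable def resolvent (A : H → Set H) (x : H) : H :=
  Classical.epsilon fun p : H => p ∈ inv (fun q => {q} + A q) x

/-- The Douglas–Rachford operator `T_γ = Id - J_{γA₁} + J_{γA₂} ∘ (2 J_{γA₁} - Id)`. -/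
noncomputable def drOp (A₁ A₂ : H → Set H) (γ : ℝ) (x : H) : H :=
  x - resolvent (γ • A₁) x + resolvent (γ • A₂) ((2 : ℝ) • resolvent (γ • A₁) x - x)

/-- The primal solution set `zer (A₁ + A₂)`. -/
def primalSol (A₁ A₂ : H → Set H) : Set H := zer (A₁ + A₂)

/-- The dual solution set `zer (A₁⁻¹ - A₂⁻¹ ∘ (-Id))`. -/
def dualSol (A₁ A₂ : H → Set H) : Set H := zer (inv A₁ - fun y => inv A₂ (-y))

end Hilbert

/-- A sequence converges `R`-linearly to a point. -/
def ConvergesRLinearly {E : Type*} [NormedAddCommGroup E] (s : ℕ → E) (p : E) : Prop :=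
  ∃ C : ℝ, 0 ≤ C ∧ ∃ r ∈ Set.Ioo (0 : ℝ) 1, ∀ n : ℕ, ‖s n - p‖ ≤ C * r ^ n

end MonOp

namespace MonOp

section Minty

variable {H : Type*} [NormedAddCommGroup H] [InnerProductSpace ℝ H]

lemma IsMaximallyMonotone.mem_of_forall_inner_nonneg {A : H → Set H}
    (hA : IsMaximallyMonotone A) {x u : H}
    (h : ∀ y v, v ∈ A y → 0 ≤ ⟪x - y, u - v⟫) : u ∈ A x := by
  have key := hA.2 (fun y => {v | v ∈ A y ∨ (y = x ∧ v = u)}) ?_ ?_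
  · have : (x, u) ∈ gra (fun y => {v | v ∈ A y ∨ (y = x ∧ v = u)}) := Or.inr ⟨rfl, rfl⟩
    rw [key] at this
    exact this
  · rintro x₁ u₁ x₂ u₂ (h₁ | ⟨h₁, h₁'⟩) (h₂ | ⟨h₂, h₂'⟩)
    · exact hA.1 h₁ h₂
    · simp only at h₂ h₂'
      subst h₂ h₂'
      have := h _ _ h₁
      rwa [← neg_sub x₁, ← neg_sub u₁, inner_neg_neg] at this
    · simp only at h₁ h₁'
      subst h₁ h₁'
      exact h _ _ h₂
    · simp only at h₁ h₁' h₂ h₂'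
      subst h₁ h₁' h₂ h₂'
      simp
  · rintro ⟨y, v⟩ hv
    exact Or.inl hv

/-- The epigraph of the Fitzpatrick function of `A`. -/
def fitzpatrickEpi (A : H → Set H) : Set (H × H × ℝ) :=
  {q | ∀ y v, v ∈ A y → ⟪y, q.2.1⟫ + ⟪q.1, v⟫ - ⟪y, v⟫ ≤ q.2.2}

/-- The regularised height `t + (‖x‖² + ‖u‖²) / 2` on `H × H × ℝ`. -/
noncomputable def regHeight (q : H × H × ℝ) : ℝ := q.2.2 + (‖q.1‖ ^ 2 + ‖q.2.1‖ ^ 2) / 2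

lemma mem_fitzpatrickEpi_of_mem {A : H → Set H} (hA : IsMonotone A) {x u : H} (h : u ∈ A x) :
    (x, u, ⟪x, u⟫) ∈ fitzpatrickEpi A := by
  intro y v hv
  have := hA (x := x) (u := u) (y := y) (v := v) h hv
  simp only [inner_sub_left, inner_sub_right] at this
  simp only
  linarith

lemma inner_le_of_mem_fitzpatrickEpi {A : H → Set H} (hA : IsMaximallyMonotone A)
    {q : H × H × ℝ} (h : q ∈ fitzpatrickEpi A) : ⟪q.1, q.2.1⟫ ≤ q.2.2 := by
  by_contra! hlt
  have hmem : q.2.1 ∈ A q.1 := by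
    refine hA.mem_of_forall_inner_nonneg fun y v hv => ?_
    have := h y v hv
    simp only [inner_sub_left, inner_sub_right]
    linarith
  have := h _ _ hmem
  linarith

lemma convex_fitzpatrickEpi (A : H → Set H) : Convex ℝ (fitzpatrickEpi A) := by
  intro q hq q' hq' a b ha hb hab y v hv
  have h₁ := mul_le_mul_of_nonneg_left (hq y v hv) ha
  have h₂ := mul_le_mul_of_nonneg_left (hq' y v hv) hb
  simp only [Prod.fst_add, Prod.snd_add, Prod.smul_fst, Prod.smul_snd, inner_add_left,
    inner_add_right, real_inner_smul_left, real_inner_smul_right, smul_eq_mul]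
  have : ⟪y, v⟫ = a * ⟪y, v⟫ + b * ⟪y, v⟫ := by rw [← add_mul, hab, one_mul]
  linarith

lemma isClosed_fitzpatrickEpi (A : H → Set H) : IsClosed (fitzpatrickEpi A) := by
  have : fitzpatrickEpi A = ⋂ (y) (v) (_ : v ∈ A y),
      {q : H × H × ℝ | ⟪y, q.2.1⟫ + ⟪q.1, v⟫ - ⟪y, v⟫ ≤ q.2.2} := by
    ext q; simp [fitzpatrickEpi]
  rw [this]
  refine isClosed_iInter fun y => isClosed_iInter fun v => isClosed_iInter fun _ => ?_
  exact isClosed_le (by fun_prop) (by fun_prop)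

lemma regHeight_nonneg {A : H → Set H} (hA : IsMaximallyMonotone A)
    {q : H × H × ℝ} (h : q ∈ fitzpatrickEpi A) : 0 ≤ regHeight q := by
  have h₁ := inner_le_of_mem_fitzpatrickEpi hA h
  have h₂ := norm_add_sq_real q.1 q.2.1
  have := sq_nonneg ‖q.1 + q.2.1‖
  unfold regHeight
  linarith

lemma norm_sub_sq_add_le_of_regHeight {A : H → Set H} {m : ℝ}
    (hm : ∀ q ∈ fitzpatrickEpi A, m ≤ regHeight q) {q q' : H × H × ℝ}
    (hq : q ∈ fitzpatrickEpi A) (hq' : q' ∈ fitzpatrickEpi A) :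
    ‖q.1 - q'.1‖ ^ 2 + ‖q.2.1 - q'.2.1‖ ^ 2 ≤ 4 * (regHeight q + regHeight q' - 2 * m) := by
  have hmid := hm _ (convex_fitzpatrickEpi A hq hq' (a := 1 / 2) (b := 1 / 2)
    (by norm_num) (by norm_num) (by norm_num))
  simp only [regHeight, Prod.fst_add, Prod.snd_add, Prod.smul_fst, Prod.smul_snd, smul_eq_mul]
    at hmid ⊢
  rw [← smul_add, ← smul_add, norm_smul, norm_smul, mul_pow, mul_pow] at hmid
  have h₁ := parallelogram_law_with_norm ℝ q.1 q'.1
  have h₂ := parallelogram_law_with_norm ℝ q.2.1 q'.2.1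
  norm_num at hmid
  linarith

lemma exists_isMinOn_regHeight [CompleteSpace H] {A : H → Set H} (hA : IsMaximallyMonotone A)
    (hne : (fitzpatrickEpi A).Nonempty) :
    ∃ q ∈ fitzpatrickEpi A, ∀ q' ∈ fitzpatrickEpi A, regHeight q ≤ regHeight q' := by
  set m := sInf (regHeight '' fitzpatrickEpi A) with hmdef
  have hbdd : BddBelow (regHeight '' fitzpatrickEpi A) := by
    refine ⟨0, ?_⟩
    rintro _ ⟨q, hq, rfl⟩
    exact regHeight_nonneg hA hq
  have hm : ∀ q ∈ fitzpatrickEpi A, m ≤ regHeight q := fun q hq =>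
    csInf_le hbdd ⟨q, hq, rfl⟩
  have hex : ∀ n : ℕ, ∃ q ∈ fitzpatrickEpi A, regHeight q < m + (1 / 2 : ℝ) ^ n := by
    intro n
    obtain ⟨_, ⟨q, hq, rfl⟩, hlt⟩ := exists_lt_of_csInf_lt (hne.image regHeight)
      (show sInf (regHeight '' fitzpatrickEpi A) < m + (1 / 2 : ℝ) ^ n by
        rw [← hmdef]; linarith [pow_pos (show (0 : ℝ) < 1 / 2 by norm_num) n])
    exact ⟨q, hq, hlt⟩
  choose s hs hslt using hex
  have hpow : Filter.Tendsto (fun n : ℕ => (1 / 2 : ℝ) ^ n) Filter.atTop (nhds 0) :=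
    tendsto_pow_atTop_nhds_zero_of_lt_one (by norm_num) (by norm_num)
  have hbound : ∀ N n k, N ≤ n → N ≤ k →
      ‖(s n).1 - (s k).1‖ ^ 2 + ‖(s n).2.1 - (s k).2.1‖ ^ 2 ≤ 8 * (1 / 2 : ℝ) ^ N := by
    intro N n k hn hk
    have h₀ := norm_sub_sq_add_le_of_regHeight hm (hs n) (hs k)
    have h₁ : (1 / 2 : ℝ) ^ n ≤ (1 / 2 : ℝ) ^ N :=
      pow_le_pow_of_le_one (by norm_num) (by norm_num) hn
    have h₂ : (1 / 2 : ℝ) ^ k ≤ (1 / 2 : ℝ) ^ N :=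
      pow_le_pow_of_le_one (by norm_num) (by norm_num) hk
    linarith [hslt n, hslt k]
  have hsqrt : Filter.Tendsto (fun N : ℕ => Real.sqrt (8 * (1 / 2 : ℝ) ^ N))
      Filter.atTop (nhds 0) := by
    have := (Real.continuous_sqrt.tendsto (8 * 0)).comp (hpow.const_mul 8)
    rwa [mul_zero, Real.sqrt_zero] at this
  have hc₁ : CauchySeq fun n => (s n).1 :=
    cauchySeq_of_le_tendsto_0 _ (fun n k N hn hk => by
      rw [dist_eq_norm]
      have := sq_nonneg ‖(s n).2.1 - (s k).2.1‖
      exact Real.le_sqrt_of_sq_le (by linarith [hbound N n k hn hk])) hsqrt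
  have hc₂ : CauchySeq fun n => (s n).2.1 :=
    cauchySeq_of_le_tendsto_0 _ (fun n k N hn hk => by
      rw [dist_eq_norm]
      have := sq_nonneg ‖(s n).1 - (s k).1‖
      exact Real.le_sqrt_of_sq_le (by linarith [hbound N n k hn hk])) hsqrt
  obtain ⟨x, hx⟩ := cauchySeq_tendsto_of_complete hc₁
  obtain ⟨u, hu⟩ := cauchySeq_tendsto_of_complete hc₂
  have hφ : Filter.Tendsto (fun n => regHeight (s n)) Filter.atTop (nhds m) := by
    refine tendsto_of_tendsto_of_tendsto_of_le_of_le tendsto_const_nhds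
      (h := fun n : ℕ => m + (1 / 2 : ℝ) ^ n) ?_ (fun n => hm _ (hs n)) (fun n => (hslt n).le)
    simpa using hpow.const_add m
  have ht : Filter.Tendsto (fun n => (s n).2.2) Filter.atTop
      (nhds (m - (‖x‖ ^ 2 + ‖u‖ ^ 2) / 2)) := by
    refine (hφ.sub (((hx.norm.pow 2).add (hu.norm.pow 2)).div_const 2)).congr fun n => ?_
    simp [regHeight]
  refine ⟨(x, u, m - (‖x‖ ^ 2 + ‖u‖ ^ 2) / 2), ?_, fun q' hq' => ?_⟩
  · exact (isClosed_fitzpatrickEpi A).mem_of_tendsto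
      (hx.prodMk_nhds (hu.prodMk_nhds ht)) (Filter.Eventually.of_forall hs)
  · have : regHeight (x, u, m - (‖x‖ ^ 2 + ‖u‖ ^ 2) / 2) = m := by simp [regHeight]
    rw [this]
    exact hm _ hq'

lemma regHeight_variational {A : H → Set H} {q q' : H × H × ℝ}
    (hq : q ∈ fitzpatrickEpi A) (hq' : q' ∈ fitzpatrickEpi A)
    (hmin : ∀ q' ∈ fitzpatrickEpi A, regHeight q ≤ regHeight q') :
    0 ≤ q'.2.2 - q.2.2 + ⟪q.1, q'.1 - q.1⟫ + ⟪q.2.1, q'.2.1 - q.2.1⟫ := by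
  set L := q'.2.2 - q.2.2 + ⟪q.1, q'.1 - q.1⟫ + ⟪q.2.1, q'.2.1 - q.2.1⟫ with hL
  set N := ‖q'.1 - q.1‖ ^ 2 + ‖q'.2.1 - q.2.1‖ ^ 2 with hN
  have hseg : ∀ s ∈ Set.Ioc (0 : ℝ) 1, 0 ≤ L + s * (N / 2) := by
    rintro s ⟨hs0, hs1⟩
    have hmem := convex_fitzpatrickEpi A hq hq' (a := 1 - s) (b := s)
      (by linarith) hs0.le (by ring)
    have h := hmin _ hmem
    have e₁ : (1 - s) • q.1 + s • q'.1 = q.1 + s • (q'.1 - q.1) := by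
      rw [smul_sub, sub_smul, one_smul]; abel
    have e₂ : (1 - s) • q.2.1 + s • q'.2.1 = q.2.1 + s • (q'.2.1 - q.2.1) := by
      rw [smul_sub, sub_smul, one_smul]; abel
    simp only [regHeight, Prod.fst_add, Prod.snd_add, Prod.smul_fst, Prod.smul_snd,
      smul_eq_mul, e₁, e₂, norm_add_sq_real, real_inner_smul_right, norm_smul, mul_pow,
      Real.norm_eq_abs, sq_abs] at h
    have : 0 ≤ s * (L + s * (N / 2)) := by
      rw [hL, hN]; linarith
    exact nonneg_of_mul_nonneg_right this hs0
  refine ge_of_tendsto (x := nhdsWithin (0 : ℝ) (Set.Ioi 0)) (f := fun s => L + s * (N / 2)) ?_ ?_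
  · have : Filter.Tendsto (fun s : ℝ => L + s * (N / 2)) (nhds 0) (nhds (L + 0 * (N / 2))) :=
      Continuous.tendsto (by fun_prop) 0
    rw [zero_mul, add_zero] at this
    exact this.mono_left nhdsWithin_le_nhds
  · filter_upwards [Ioc_mem_nhdsGT (show (0 : ℝ) < 1 by norm_num)] with s hs using hseg s hs

/-- **The Minty surjectivity theorem**, at the origin. -/
lemma IsMaximallyMonotone.exists_neg_mem [CompleteSpace H] {A : H → Set H}
    (hA : IsMaximallyMonotone A) : ∃ p, -p ∈ A p := by
  have hne : ∃ y v, v ∈ A y := by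
    by_contra! hempty
    exact hempty 0 0 (hA.mem_of_forall_inner_nonneg fun y v hv => absurd hv (hempty y v))
  obtain ⟨y₀, v₀, hv₀⟩ := hne
  obtain ⟨⟨x, u, t⟩, hq, hmin⟩ :=
    exists_isMinOn_regHeight hA ⟨_, mem_fitzpatrickEpi_of_mem hA.1 hv₀⟩
  have ht : ⟪x, u⟫ ≤ t := inner_le_of_mem_fitzpatrickEpi hA hq
  have hxu := norm_add_sq_real x u
  have hvar : ∀ y v, v ∈ A y → ‖x + u‖ ^ 2 ≤ ⟪-u - y, -x - v⟫ := by
    intro y v hv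
    have h := regHeight_variational hq (mem_fitzpatrickEpi_of_mem hA.1 hv) hmin
    simp only [inner_sub_left, inner_sub_right, inner_neg_left, inner_neg_right,
      real_inner_self_eq_norm_sq] at h ⊢
    linarith [real_inner_comm x y, real_inner_comm u v, real_inner_comm x u]
  have hmem : -x ∈ A (-u) := hA.mem_of_forall_inner_nonneg fun y v hv =>
    (sq_nonneg _).trans (hvar y v hv)
  have h0 : ‖x + u‖ ^ 2 ≤ 0 := by simpa using hvar _ _ hmem
  have h0 : x + u = 0 := by
    have := sq_eq_zero_iff.1 (le_antisymm h0 (sq_nonneg _))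
    exact norm_eq_zero.1 this
  refine ⟨x, ?_⟩
  rwa [← eq_neg_of_add_eq_zero_left h0] at hmem

lemma isMaximallyMonotone_of_mem {A : H → Set H} (hA : IsMonotone A)
    (h : ∀ x u, (∀ y v, v ∈ A y → 0 ≤ ⟪x - y, u - v⟫) → u ∈ A x) : IsMaximallyMonotone A := by
  refine ⟨hA, fun B hB hAB => (hAB.antisymm ?_).symm⟩
  rintro ⟨x, u⟩ hu
  exact h x u fun y v hv => hB hu (hAB (a := (y, v)) hv)

/-- **The Minty surjectivity theorem**. -/
lemma IsMaximallyMonotone.exists_smul_sub_mem [CompleteSpace H] {A : H → Set H}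
    (hA : IsMaximallyMonotone A) {γ : ℝ} (hγ : 0 < γ) (x : H) :
    ∃ p, γ⁻¹ • (x - p) ∈ A p := by
  have hB : IsMaximallyMonotone fun q => {v | γ⁻¹ • v ∈ A (q + x)} := by
    refine isMaximallyMonotone_of_mem ?_ ?_
    · intro q v q' v' hv hv'
      have := hA.1 (x := q + x) (y := q' + x) hv hv'
      rw [add_sub_add_right_eq_sub, ← smul_sub, real_inner_smul_right] at this
      exact nonneg_of_mul_nonneg_right this (inv_pos.2 hγ)
    · intro q v h
      refine hA.mem_of_forall_inner_nonneg fun y w hw => ?_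
      have := h (y - x) (γ • w) (by simpa [smul_smul, inv_mul_cancel₀ hγ.ne'] using hw)
      have e : v - γ • w = γ • (γ⁻¹ • v - w) := by
        rw [smul_sub, smul_smul, mul_inv_cancel₀ hγ.ne', one_smul]
      rw [e, real_inner_smul_right, sub_sub_eq_add_sub] at this
      exact nonneg_of_mul_nonneg_right this hγ
  obtain ⟨q, hq⟩ := hB.exists_neg_mem
  refine ⟨q + x, ?_⟩
  have : x - (q + x) = -q := by abel
  rw [this]
  exact hq

lemma mem_inv_singleton_add_smul_iff {A : H → Set H} {γ : ℝ} (hγ : 0 < γ) {x p : H} :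
    p ∈ inv (fun q => {q} + (γ • A) q) x ↔ γ⁻¹ • (x - p) ∈ A p := by
  simp only [inv, Set.singleton_add, Set.mem_ofPred_eq, Pi.smul_apply, Set.image_add_left,
    Set.mem_preimage, Set.mem_smul_set_iff_inv_smul_mem₀ hγ.ne']
  rw [neg_add_eq_sub]

lemma IsMaximallyMonotone.resolvent_mem [CompleteSpace H] {A : H → Set H}
    (hA : IsMaximallyMonotone A) {γ : ℝ} (hγ : 0 < γ) (x : H) :
    γ⁻¹ • (x - resolvent (γ • A) x) ∈ A (resolvent (γ • A) x) := by
  obtain ⟨p, hp⟩ := hA.exists_smul_sub_mem hγ x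
  exact (mem_inv_singleton_add_smul_iff hγ).1
    (Classical.epsilon_spec ⟨p, (mem_inv_singleton_add_smul_iff hγ).2 hp⟩)

/-- If `b₁ - b₂` makes a nonnegative angle with `a₁ - a₂`, then the distance between the points
`aᵢ + γ bᵢ` dominates both `‖a₁ - a₂‖` and `γ ‖b₁ - b₂‖`. -/
lemma norm_sub_le_of_inner_nonneg {a₁ b₁ a₂ b₂ : H} (h : 0 ≤ ⟪a₁ - a₂, b₁ - b₂⟫) {γ : ℝ}
    (hγ : 0 ≤ γ) : ‖a₁ - a₂‖ ≤ ‖a₁ + γ • b₁ - (a₂ + γ • b₂)‖ ∧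
      γ * ‖b₁ - b₂‖ ≤ ‖a₁ + γ • b₁ - (a₂ + γ • b₂)‖ := by
  have e : a₁ + γ • b₁ - (a₂ + γ • b₂) = (a₁ - a₂) + γ • (b₁ - b₂) := by
    rw [smul_sub]; abel
  have hsq := norm_add_sq_real (a₁ - a₂) (γ • (b₁ - b₂))
  rw [real_inner_smul_right, norm_smul, Real.norm_of_nonneg hγ] at hsq
  have h' := mul_nonneg hγ h
  rw [e]
  constructor
  · exact (sq_le_sq₀ (norm_nonneg _) (norm_nonneg _)).1 (by nlinarith [sq_nonneg (γ * ‖b₁ - b₂‖)])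
  · exact (sq_le_sq₀ (by positivity) (norm_nonneg _)).1 (by nlinarith [sq_nonneg ‖a₁ - a₂‖])

lemma IsMaximallyMonotone.resolvent_eq [CompleteSpace H] {A : H → Set H}
    (hA : IsMaximallyMonotone A) {γ : ℝ} (hγ : 0 < γ) {p u : H} (hu : u ∈ A p) :
    resolvent (γ • A) (p + γ • u) = p := by
  have hmem := hA.resolvent_mem hγ (p + γ • u)
  generalize resolvent (γ • A) (p + γ • u) = q at hmem ⊢
  have h := (norm_sub_le_of_inner_nonneg (hA.1 hmem hu) hγ.le).1
  rw [smul_smul, mul_inv_cancel₀ hγ.ne', one_smul, add_sub_cancel, sub_self, norm_zero] at h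
  exact sub_eq_zero.1 (norm_le_zero_iff.1 h)

end Minty

end MonOp

namespace MonOp

section Solutions

variable {H : Type*} [NormedAddCommGroup H] {A₁ A₂ : H → Set H}

lemma mem_primalSol_iff {p : H} : p ∈ primalSol A₁ A₂ ↔ ∃ u, u ∈ A₁ p ∧ -u ∈ A₂ p := by
  simp only [primalSol, zer, Set.mem_ofPred_eq, Pi.add_apply, Set.mem_add]
  constructor
  · rintro ⟨u, hu, v, hv, huv⟩
    exact ⟨u, hu, by rwa [← eq_neg_of_add_eq_zero_right huv]⟩
  · rintro ⟨u, hu, hv⟩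
    exact ⟨u, hu, -u, hv, add_neg_cancel u⟩

lemma mem_dualSol_iff {u : H} : u ∈ dualSol A₁ A₂ ↔ ∃ p, u ∈ A₁ p ∧ -u ∈ A₂ p := by
  simp only [dualSol, zer, Set.mem_ofPred_eq, Pi.sub_apply, Set.mem_sub, inv]
  constructor
  · rintro ⟨p, hp, q, hq, hpq⟩
    obtain rfl := sub_eq_zero.1 hpq
    exact ⟨p, hp, hq⟩
  · rintro ⟨p, hp, hq⟩
    exact ⟨p, hp, p, hq, sub_self p⟩

lemma IsProj.norm_sub_le {X : Set H} {y p q : H} (h : IsProj X y p) (hq : q ∈ X) :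
    ‖p - q‖ ≤ 2 * ‖y - q‖ := by
  have h₁ := h.2 q hq
  have h₂ : ‖p - q‖ ≤ ‖y - q‖ + ‖y - p‖ := by
    have : p - q = (y - q) - (y - p) := by abel
    rw [this]
    exact _root_.norm_sub_le _ _
  linarith

end Solutions

section Contraction

variable {H : Type*} [NormedAddCommGroup H] [InnerProductSpace ℝ H] {A₁ A₂ : H → Set H}

/-- For paramonotone operators, every primal solution is paired with every dual solution. -/
lemma mem_and_neg_mem_of_isParamonotone (h₁ : IsParamonotone A₁) (h₂ : IsParamonotone A₂)
    {p u : H} (hp : p ∈ primalSol A₁ A₂) (hu : u ∈ dualSol A₁ A₂) : u ∈ A₁ p ∧ -u ∈ A₂ p := by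
  obtain ⟨v, hv₁, hv₂⟩ := mem_primalSol_iff.1 hp
  obtain ⟨q, hq₁, hq₂⟩ := mem_dualSol_iff.1 hu
  have i₁ : 0 ≤ ⟪p - q, v - u⟫ := h₁.1 hv₁ hq₁
  have i₂ : 0 ≤ ⟪p - q, -v - -u⟫ := h₂.1 hv₂ hq₂
  have e : ⟪p - q, -v - -u⟫ = -⟪p - q, v - u⟫ := by
    rw [← inner_neg_right]; congr 1; abel
  exact ⟨(h₁.2 hv₁ hq₁ (by linarith)).1, (h₂.2 hv₂ hq₂ (by linarith)).1⟩

lemma exists_isProj [CompleteSpace H] {X : Set H} (hne : X.Nonempty) (hc : IsClosed X)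
    (hconv : Convex ℝ X) (y : H) : ∃ p, IsProj X y p := by
  obtain ⟨p, hp, h⟩ := exists_norm_eq_iInf_of_complete_convex hne hc.isComplete hconv y
  refine ⟨p, hp, fun q hq => ?_⟩
  rw [h]
  exact ciInf_le ⟨0, by rintro _ ⟨q, rfl⟩; exact norm_nonneg _⟩ (⟨q, hq⟩ : X)

/-- The gap in Fejér monotonicity of a Douglas–Rachford step with respect to `p + γ u`, where
`(z, g) ∈ gra A₁` and `(y, h) ∈ gra A₂` are the pairs visited by the step. -/
def fejerGap (z g y h p u : H) : ℝ := ⟪z - p, g - u⟫ + ⟪y - p, h + u⟫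

lemma norm_sub_sq_eq_fejerGap {γ : ℝ} {z g y h : H} (hh : γ • (g + h) = z - y) (p u : H) :
    ‖y + γ • g - (p + γ • u)‖ ^ 2 = ‖z + γ • g - (p + γ • u)‖ ^ 2 - ‖z - y‖ ^ 2
      - 2 * γ * fejerGap z g y h p u := by
  have e₁ : y + γ • g - (p + γ • u) = (y - p) + γ • (g - u) := by rw [smul_sub]; abel
  have e₂ : z + γ • g - (p + γ • u) = (z - p) + γ • (g - u) := by rw [smul_sub]; abel
  have e₃ : z - y = (z - p) - (y - p) := by abel
  have e₄ : γ * ⟪y - p, h + u⟫ = ⟪y - p, z - y⟫ - γ * ⟪y - p, g - u⟫ := by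
    rw [← hh, ← real_inner_smul_right, ← real_inner_smul_right, ← inner_sub_right]
    congr 1
    rw [← smul_sub]; congr 1; abel
  have e₅ : 2 * γ * fejerGap z g y h p u = 2 * (γ * ⟪z - p, g - u⟫)
      + 2 * (⟪y - p, z - y⟫ - γ * ⟪y - p, g - u⟫) := by
    rw [← e₄, fejerGap]; ring
  rw [e₅, e₁, e₂, e₃]
  generalize z - p = a
  generalize y - p = b
  generalize g - u = c
  simp only [norm_add_sq_real, norm_sub_sq_real, real_inner_smul_right, inner_sub_right,
    real_inner_self_eq_norm_sq, real_inner_comm a b]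
  ring

lemma fejerGap_sub_primal (z g y h p q u : H) :
    fejerGap z g y h p u = fejerGap z g y h q u + ⟪q - p, g + h⟫ := by
  simp only [fejerGap, inner_sub_left, inner_sub_right, inner_add_right]
  ring

lemma fejerGap_sub_dual (z g y h p u v : H) :
    fejerGap z g y h p u = fejerGap z g y h p v + ⟪z - y, v - u⟫ := by
  simp only [fejerGap, inner_sub_left, inner_sub_right, inner_add_right]
  ring

variable {z g y h p₀ u₀ : H} {γ μ ρ e : ℝ}

lemma exists_primal_estimate [CompleteSpace H] (hA₁ : IsMonotone A₁) (hA₂ : IsMonotone A₂)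
    (hpair : ∀ p ∈ primalSol A₁ A₂, ∀ u ∈ dualSol A₁ A₂, u ∈ A₁ p ∧ -u ∈ A₂ p)
    (hμ : IsStronglyMonotoneRel A₁ μ (primalSol A₁ A₂) ∨
      IsStronglyMonotoneRel A₂ μ (primalSol A₁ A₂))
    (hγ : 0 < γ) (hg : g ∈ A₁ z) (hh : h ∈ A₂ y) (hgh : γ • (g + h) = z - y)
    (hp₀ : p₀ ∈ primalSol A₁ A₂) (hu₀ : u₀ ∈ dualSol A₁ A₂)
    (hze : ‖z - p₀‖ ≤ e) (hte : ‖z - y‖ ≤ e) :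
    ∃ p ∈ primalSol A₁ A₂, ∃ m : ℝ, ‖z - p‖ ≤ m + ‖z - y‖ ∧
      μ * m ^ 2 ≤ fejerGap z g y h p₀ u₀ + 4 * e * ‖z - y‖ / γ := by
  have hgh' : ‖g + h‖ = ‖z - y‖ / γ := by
    rw [← hgh, norm_smul, Real.norm_of_nonneg hγ.le, mul_div_cancel_left₀ _ hγ.ne']
  have hshift : ∀ p, ‖p - p₀‖ ≤ 4 * e →
      fejerGap z g y h p u₀ ≤ fejerGap z g y h p₀ u₀ + 4 * e * ‖z - y‖ / γ := by
    intro p hp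
    have h₁ := neg_le_of_abs_le (abs_real_inner_le_norm (p - p₀) (g + h))
    have h₂ : ‖p - p₀‖ * ‖g + h‖ ≤ 4 * e * ‖z - y‖ / γ := by
      rw [hgh', mul_div_assoc]
      gcongr
    rw [fejerGap_sub_primal z g y h p₀ p u₀]
    linarith
  rcases hμ with hμ | hμ
  · obtain ⟨p, hp⟩ := exists_isProj hμ.nonempty hμ.closed hμ.convex z
    obtain ⟨hu₁, hu₂⟩ := hpair p hp.1 u₀ hu₀
    refine ⟨p, hp.1, ‖z - p‖, by linarith [norm_nonneg (z - y)], ?_⟩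
    refine le_trans ?_ (hshift p (by linarith [hp.norm_sub_le hp₀, norm_nonneg (z - y)]))
    have h₁ := hμ.le_inner (show (z, g) ∈ gra A₁ from hg) hp hu₁
    have h₂ : 0 ≤ ⟪y - p, h - -u₀⟫ := hA₂ hh hu₂
    rw [sub_neg_eq_add] at h₂
    rw [real_inner_comm] at h₁
    exact h₁.trans (le_add_of_nonneg_right h₂)
  · obtain ⟨p, hp⟩ := exists_isProj hμ.nonempty hμ.closed hμ.convex y
    obtain ⟨hu₁, hu₂⟩ := hpair p hp.1 u₀ hu₀
    refine ⟨p, hp.1, ‖y - p‖, ?_, ?_⟩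
    · rw [add_comm]; exact norm_sub_le_norm_sub_add_norm_sub z y p
    have hy : ‖y - p₀‖ ≤ ‖y - z‖ + ‖z - p₀‖ := norm_sub_le_norm_sub_add_norm_sub y z p₀
    rw [norm_sub_rev y z] at hy
    refine le_trans ?_ (hshift p (by linarith [hp.norm_sub_le hp₀]))
    have h₁ := hμ.le_inner (show (y, h) ∈ gra A₂ from hh) hp hu₂
    have h₂ : 0 ≤ ⟪z - p, g - u₀⟫ := hA₁ hg hu₁
    rw [real_inner_comm, sub_neg_eq_add] at h₁
    exact h₁.trans (le_add_of_nonneg_left h₂)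

lemma exists_dual_estimate [CompleteSpace H] (hA₁ : IsMonotone A₁) (hA₂ : IsMonotone A₂)
    (hpair : ∀ p ∈ primalSol A₁ A₂, ∀ u ∈ dualSol A₁ A₂, u ∈ A₁ p ∧ -u ∈ A₂ p)
    (hρ : IsStronglyMonotoneRel (inv A₁) ρ (dualSol A₁ A₂) ∨
      IsStronglyMonotoneRel (inv A₂) ρ (-dualSol A₁ A₂))
    (hγ : 0 < γ) (hg : g ∈ A₁ z) (hh : h ∈ A₂ y) (hgh : γ • (g + h) = z - y)
    (hp₀ : p₀ ∈ primalSol A₁ A₂) (hu₀ : u₀ ∈ dualSol A₁ A₂)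
    (hge : γ * ‖g - u₀‖ ≤ e) (hte : ‖z - y‖ ≤ e) :
    ∃ u ∈ dualSol A₁ A₂, ∃ l : ℝ, γ * ‖g - u‖ ≤ γ * l + ‖z - y‖ ∧
      ρ * l ^ 2 ≤ fejerGap z g y h p₀ u₀ + 4 * e * ‖z - y‖ / γ := by
  have hgh' : γ * ‖g + h‖ = ‖z - y‖ := by
    rw [← hgh, norm_smul, Real.norm_of_nonneg hγ.le]
  have hshift : ∀ u, γ * ‖u - u₀‖ ≤ 4 * e →
      fejerGap z g y h p₀ u ≤ fejerGap z g y h p₀ u₀ + 4 * e * ‖z - y‖ / γ := by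
    intro u hu
    have h₁ := neg_le_of_abs_le (abs_real_inner_le_norm (z - y) (u - u₀))
    have h₂ : ‖z - y‖ * ‖u - u₀‖ ≤ 4 * e * ‖z - y‖ / γ := by
      rw [le_div_iff₀ hγ]
      nlinarith [mul_le_mul_of_nonneg_right hu (norm_nonneg (z - y))]
    rw [fejerGap_sub_dual z g y h p₀ u₀ u]
    linarith
  rcases hρ with hρ | hρ
  · obtain ⟨u, hu⟩ := exists_isProj hρ.nonempty hρ.closed hρ.convex g
    obtain ⟨hu₁, hu₂⟩ := hpair p₀ hp₀ u hu.1
    refine ⟨u, hu.1, ‖g - u‖, by linarith [norm_nonneg (z - y)], ?_⟩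
    have hu₃ := mul_le_mul_of_nonneg_left (hu.norm_sub_le hu₀) hγ.le
    refine le_trans ?_ (hshift u (by linarith [norm_nonneg (z - y)]))
    have h₁ := hρ.le_inner (show (g, z) ∈ gra (inv A₁) from hg) hu (show p₀ ∈ inv A₁ u from hu₁)
    have h₂ : 0 ≤ ⟪y - p₀, h - -u⟫ := hA₂ hh hu₂
    rw [sub_neg_eq_add] at h₂
    exact h₁.trans (le_add_of_nonneg_right h₂)
  · obtain ⟨v, hv⟩ := exists_isProj hρ.nonempty hρ.closed hρ.convex h
    obtain ⟨u, rfl⟩ : ∃ u, v = -u := ⟨-v, (neg_neg v).symm⟩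
    have huD : u ∈ dualSol A₁ A₂ := by simpa using hv.1
    obtain ⟨hu₁, hu₂⟩ := hpair p₀ hp₀ u huD
    refine ⟨u, huD, ‖h + u‖, ?_, ?_⟩
    · rw [← hgh', ← mul_add]
      gcongr
      have : g - u = (g + h) - (h + u) := by abel
      rw [this, add_comm ‖h + u‖]
      exact norm_sub_le _ _
    have hv₁ := hv.norm_sub_le (q := -u₀) (by simpa using hu₀)
    rw [neg_sub_neg, norm_sub_rev, sub_neg_eq_add] at hv₁
    have hv₂ : ‖h + u₀‖ ≤ ‖g + h‖ + ‖g - u₀‖ := by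
      have : h + u₀ = (g + h) - (g - u₀) := by abel
      rw [this]
      exact norm_sub_le _ _
    have hv₃ := mul_le_mul_of_nonneg_left hv₁ hγ.le
    have hv₄ := mul_le_mul_of_nonneg_left hv₂ hγ.le
    refine le_trans ?_ (hshift u (by linarith))
    have h₁ := hρ.le_inner (show (h, y) ∈ gra (inv A₂) from hh) hv
      (show p₀ ∈ inv A₂ (-u) from hu₂)
    have h₂ : 0 ≤ ⟪z - p₀, g - u⟫ := hA₁ hg hu₁
    rw [sub_neg_eq_add] at h₁
    exact h₁.trans (le_add_of_nonneg_left h₂)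

lemma sq_le_of_half_le_add {a b m l t S K : ℝ} (ha : 0 < a) (hμ : 0 < μ) (hρ : 0 < ρ)
    (haγ : a ≤ γ) (hγb : γ ≤ b) (ht : 0 ≤ t) (he : 0 ≤ e)
    (hS : 0 ≤ S) (hmS : μ * m ^ 2 ≤ S + 4 * e * t / γ) (hlS : ρ * l ^ 2 ≤ S + 4 * e * t / γ)
    (hhalf : e / 2 ≤ m + γ * l + 2 * t) (hK : K = 2 * (1 / μ + b ^ 2 / ρ)) :
    e ^ 2 ≤ 8 * (K / a + 8 + 128 * K ^ 2 / a ^ 2) * (t ^ 2 + 2 * γ * S) := by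
  have hγ : 0 < γ := ha.trans_le haγ
  have hK0 : 0 ≤ K := by rw [hK]; positivity
  set Q := S + 4 * e * t / γ with hQ
  have hQ0 : 0 ≤ Q := by positivity
  have h₁ : m ^ 2 ≤ 1 / μ * Q := by
    rw [one_div, ← div_eq_inv_mul, le_div_iff₀ hμ]; linarith
  have h₂ : (γ * l) ^ 2 ≤ b ^ 2 / ρ * Q := by
    have : l ^ 2 ≤ Q / ρ := by rw [le_div_iff₀ hρ]; linarith
    calc (γ * l) ^ 2 = γ ^ 2 * l ^ 2 := by ring
      _ ≤ b ^ 2 * (Q / ρ) := by gcongr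
      _ = b ^ 2 / ρ * Q := by ring
  have h₃ : (m + γ * l) ^ 2 ≤ K * Q := by
    rw [hK]; nlinarith [sq_nonneg (m - γ * l)]
  have h₄ : e ^ 2 / 4 ≤ 2 * (K * Q) + 8 * t ^ 2 := by
    have : (e / 2) ^ 2 ≤ (m + γ * l + 2 * t) ^ 2 := by gcongr
    nlinarith [sq_nonneg (m + γ * l - 2 * t)]
  have h₅ : K * Q = K * S + e * (4 * K * t / γ) := by rw [hQ]; ring
  have h₆ : 2 * (e * (4 * K * t / γ)) ≤ e ^ 2 / 8 + 128 * K ^ 2 / γ ^ 2 * t ^ 2 := by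
    have e₁ : 128 * K ^ 2 / γ ^ 2 * t ^ 2 = 8 * (4 * K * t / γ) ^ 2 := by ring
    rw [e₁]
    nlinarith [sq_nonneg (e - 8 * (4 * K * t / γ))]
  have h₇ : 128 * K ^ 2 / γ ^ 2 * t ^ 2 ≤ 128 * K ^ 2 / a ^ 2 * t ^ 2 := by gcongr
  have h₈ : 2 * (K * S) ≤ K / a * (2 * γ * S) := by
    have : K ≤ K / a * γ := by
      rw [div_mul_eq_mul_div, le_div_iff₀ ha]; gcongr
    nlinarith
  have h₉ : 0 ≤ K / a * t ^ 2 := by positivity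
  have h₁₀ : 0 ≤ (8 + 128 * K ^ 2 / a ^ 2) * (2 * γ * S) := by positivity
  linarith

/-- One Douglas–Rachford step contracts the distance to the fixed point set `P + γ D`, uniformly
for step sizes `γ` in a compact interval. -/
lemma exists_contraction_factor [CompleteSpace H] (hA₁ : IsMonotone A₁) (hA₂ : IsMonotone A₂)
    (hpair : ∀ p ∈ primalSol A₁ A₂, ∀ u ∈ dualSol A₁ A₂, u ∈ A₁ p ∧ -u ∈ A₂ p)
    (hμ : IsStronglyMonotoneRel A₁ μ (primalSol A₁ A₂) ∨
      IsStronglyMonotoneRel A₂ μ (primalSol A₁ A₂))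
    (hρ : IsStronglyMonotoneRel (inv A₁) ρ (dualSol A₁ A₂) ∨
      IsStronglyMonotoneRel (inv A₂) ρ (-dualSol A₁ A₂))
    {a b : ℝ} (ha : 0 < a) :
    ∃ κ ∈ Set.Ioo (0 : ℝ) 1, ∀ γ ∈ Set.Icc a b, ∀ z g y h : H, g ∈ A₁ z → h ∈ A₂ y →
      γ • (g + h) = z - y → ∀ p₀ ∈ primalSol A₁ A₂, ∀ u₀ ∈ dualSol A₁ A₂,
      ‖z - y‖ ≤ ‖z + γ • g - (p₀ + γ • u₀)‖ ∧
      ‖y + γ • g - (p₀ + γ • u₀)‖ ≤ ‖z + γ • g - (p₀ + γ • u₀)‖ ∧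
      ∃ p ∈ primalSol A₁ A₂, ∃ u ∈ dualSol A₁ A₂,
        ‖y + γ • g - (p + γ • u)‖ ≤ κ * ‖z + γ • g - (p₀ + γ • u₀)‖ := by
  have hμ0 : 0 < μ := hμ.elim (·.pos) (·.pos)
  have hρ0 : 0 < ρ := hρ.elim (·.pos) (·.pos)
  obtain ⟨K, hK⟩ : ∃ K, K = 2 * (1 / μ + b ^ 2 / ρ) := ⟨_, rfl⟩
  have hK0 : 0 ≤ K := by rw [hK]; positivity
  obtain ⟨M, hM⟩ : ∃ M, M = 8 * (K / a + 8 + 128 * K ^ 2 / a ^ 2) := ⟨_, rfl⟩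
  have hM64 : 64 ≤ M := by
    have h₁ : 0 ≤ K / a := by positivity
    have h₂ : 0 ≤ 128 * K ^ 2 / a ^ 2 := by positivity
    linarith
  have hM0 : 0 < M := by linarith
  have hMinv : 1 / M ≤ 1 / 64 := one_div_le_one_div_of_le (by norm_num) hM64
  have hMpos : 0 < 1 / M := by positivity
  have hκ2 : 1 / 2 ≤ Real.sqrt (1 - 1 / M) := Real.le_sqrt_of_sq_le (by linarith)
  have hκ0 : 0 < Real.sqrt (1 - 1 / M) := by linarith
  have hκsq : Real.sqrt (1 - 1 / M) ^ 2 = 1 - 1 / M := Real.sq_sqrt (by linarith)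
  refine ⟨Real.sqrt (1 - 1 / M), ⟨hκ0, ?_⟩, ?_⟩
  · rw [Real.sqrt_lt' one_pos]; linarith
  rintro γ ⟨haγ, hγb⟩ z g y h hg hh hgh p₀ hp₀ u₀ hu₀
  have hγ : 0 < γ := ha.trans_le haγ
  have hgap : ∀ p ∈ primalSol A₁ A₂, ∀ u ∈ dualSol A₁ A₂, 0 ≤ fejerGap z g y h p u := by
    intro p hp u hu
    obtain ⟨hu₁, hu₂⟩ := hpair p hp u hu
    have h₁ : 0 ≤ ⟪z - p, g - u⟫ := hA₁ hg hu₁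
    have h₂ : 0 ≤ ⟪y - p, h - -u⟫ := hA₂ hh hu₂
    rw [sub_neg_eq_add] at h₂
    exact add_nonneg h₁ h₂
  have hfejer : ∀ p ∈ primalSol A₁ A₂, ∀ u ∈ dualSol A₁ A₂,
      ‖z - y‖ ≤ ‖z + γ • g - (p + γ • u)‖ ∧
      ‖y + γ • g - (p + γ • u)‖ ≤ ‖z + γ • g - (p + γ • u)‖ := by
    intro p hp u hu
    have h₁ := norm_sub_sq_eq_fejerGap hgh p u
    have h₂ := mul_nonneg (mul_nonneg zero_le_two hγ.le) (hgap p hp u hu)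
    constructor
    · refine (sq_le_sq₀ (norm_nonneg _) (norm_nonneg _)).1 ?_
      linarith [sq_nonneg ‖y + γ • g - (p + γ • u)‖]
    · refine (sq_le_sq₀ (norm_nonneg _) (norm_nonneg _)).1 ?_
      linarith [sq_nonneg ‖z - y‖]
  obtain ⟨hte, hwe⟩ := hfejer p₀ hp₀ u₀ hu₀
  refine ⟨hte, hwe, ?_⟩
  obtain ⟨hze, hge⟩ := norm_sub_le_of_inner_nonneg (hA₁ hg (hpair p₀ hp₀ u₀ hu₀).1) hγ.le
  obtain ⟨p, hp, m, hzp, hmS⟩ :=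
    exists_primal_estimate hA₁ hA₂ hpair hμ hγ hg hh hgh hp₀ hu₀ hze hte
  obtain ⟨u, hu, l, hgu, hlS⟩ :=
    exists_dual_estimate hA₁ hA₂ hpair hρ hγ hg hh hgh hp₀ hu₀ hge hte
  have hδ : ‖z + γ • g - (p + γ • u)‖ ≤ m + γ * l + 2 * ‖z - y‖ := by
    have e₁ : z + γ • g - (p + γ • u) = (z - p) + γ • (g - u) := by rw [smul_sub]; abel
    have h₁ := norm_add_le (z - p) (γ • (g - u))
    rw [norm_smul, Real.norm_of_nonneg hγ.le] at h₁
    rw [e₁]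
    linarith
  have heq := norm_sub_sq_eq_fejerGap hgh p₀ u₀
  have hgap₀ := hgap p₀ hp₀ u₀ hu₀
  set e := ‖z + γ • g - (p₀ + γ • u₀)‖ with he
  have he0 : 0 ≤ e := norm_nonneg _
  rcases le_total (m + γ * l + 2 * ‖z - y‖) (e / 2) with hle | hge'
  · refine ⟨p, hp, u, hu, ?_⟩
    have := (hfejer p hp u hu).2
    nlinarith [mul_le_mul_of_nonneg_right hκ2 he0]
  · refine ⟨p₀, hp₀, u₀, hu₀, ?_⟩
    have hmain := sq_le_of_half_le_add ha hμ0 hρ0 haγ hγb (norm_nonneg _) he0 hgap₀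
      hmS hlS hge' hK
    rw [← hM] at hmain
    refine (sq_le_sq₀ (norm_nonneg _) (by positivity)).1 ?_
    rw [mul_pow, hκsq, heq]
    have : 1 / M * e ^ 2 ≤ ‖z - y‖ ^ 2 + 2 * γ * fejerGap z g y h p₀ u₀ := by
      rw [one_div, ← div_eq_inv_mul, div_le_iff₀ hM0]; linarith
    linarith

end Contraction

end MonOp

namespace MonOp

section RLinear

variable {E F G : Type*} [NormedAddCommGroup E] [NormedAddCommGroup F] [NormedAddCommGroup G]

lemma ConvergesRLinearly.tendsto {s : ℕ → E} {p : E} (h : ConvergesRLinearly s p) :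
    Filter.Tendsto s Filter.atTop (nhds p) := by
  obtain ⟨C, -, r, ⟨hr0, hr1⟩, hs⟩ := h
  rw [tendsto_iff_norm_sub_tendsto_zero]
  refine squeeze_zero (fun _ => norm_nonneg _) hs ?_
  simpa using (tendsto_pow_atTop_nhds_zero_of_lt_one hr0.le hr1).const_mul C

lemma ConvergesRLinearly.of_norm_le {s : ℕ → E} {p : E} {s₁ : ℕ → F} {p₁ : F} {s₂ : ℕ → G}
    {p₂ : G} (h₁ : ConvergesRLinearly s₁ p₁) (h₂ : ConvergesRLinearly s₂ p₂) {c : ℝ}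
    (hc : 0 ≤ c) (h : ∀ n, ‖s n - p‖ ≤ c * (‖s₁ n - p₁‖ + ‖s₂ n - p₂‖)) :
    ConvergesRLinearly s p := by
  obtain ⟨C₁, hC₁, r₁, ⟨hr₁, hr₁'⟩, hs₁⟩ := h₁
  obtain ⟨C₂, hC₂, r₂, ⟨hr₂, hr₂'⟩, hs₂⟩ := h₂
  refine ⟨c * (C₁ + C₂), by positivity, max r₁ r₂, ⟨lt_max_of_lt_left hr₁, max_lt hr₁' hr₂'⟩,
    fun n => (h n).trans ?_⟩
  have e₁ : r₁ ^ n ≤ max r₁ r₂ ^ n := by gcongr; exact le_max_left _ _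
  have e₂ : r₂ ^ n ≤ max r₁ r₂ ^ n := by gcongr; exact le_max_right _ _
  rw [mul_assoc, add_mul]
  gcongr
  · exact (hs₁ n).trans (by gcongr)
  · exact (hs₂ n).trans (by gcongr)

/-- A sequence whose increments are dominated by two geometric sequences converges
`R`-linearly. -/
lemma exists_convergesRLinearly_of_norm_sub_le [CompleteSpace E] {s : ℕ → E}
    {C₁ C₂ r₁ r₂ : ℝ} (hC₁ : 0 ≤ C₁) (hC₂ : 0 ≤ C₂) (hr₁ : r₁ ∈ Set.Ioo (0 : ℝ) 1)
    (hr₂ : r₂ ∈ Set.Ioo (0 : ℝ) 1)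
    (h : ∀ n, ‖s (n + 1) - s n‖ ≤ C₁ * r₁ ^ n + C₂ * r₂ ^ n) :
    ∃ p, ConvergesRLinearly s p := by
  have hr₁0 := hr₁.1
  have hr₂0 := hr₂.1
  set r := max r₁ r₂
  have hr1 : r < 1 := max_lt hr₁.2 hr₂.2
  have hd : ∀ n, dist (s n) (s (n + 1)) ≤ (C₁ + C₂) * r ^ n := by
    intro n
    rw [dist_comm, dist_eq_norm, add_mul]
    refine (h n).trans ?_
    gcongr
    · exact le_max_left _ _
    · exact le_max_right _ _
  obtain ⟨p, hp⟩ := cauchySeq_tendsto_of_complete (cauchySeq_of_le_geometric r _ hr1 hd)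
  refine ⟨p, (C₁ + C₂) / (1 - r), div_nonneg (by positivity) (by linarith), r,
    ⟨lt_max_of_lt_left hr₁0, hr1⟩, fun n => ?_⟩
  have := dist_le_of_le_geometric_of_tendsto r _ hr1 hd hp n
  rw [dist_eq_norm] at this
  rwa [div_mul_eq_mul_div]

lemma exists_prod_one_add_geometric_le {K r : ℝ} (hK : 0 ≤ K) (hr : r ∈ Set.Ioo (0 : ℝ) 1) :
    ∃ M : ℝ, ∀ n, ∏ k ∈ Finset.range n, (1 + K * r ^ k) ≤ M := by
  refine ⟨Real.exp (K * (1 - r)⁻¹), fun n => ?_⟩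
  have hr0 := hr.1
  calc ∏ k ∈ Finset.range n, (1 + K * r ^ k)
      ≤ ∏ k ∈ Finset.range n, Real.exp (K * r ^ k) := by
        refine Finset.prod_le_prod (fun k _ => by positivity) fun k _ => ?_
        rw [add_comm]
        exact Real.add_one_le_exp _
    _ = Real.exp (K * ∑ k ∈ Finset.range n, r ^ k) := by
        rw [← Real.exp_sum, Finset.mul_sum]
    _ ≤ Real.exp (K * (1 - r)⁻¹) := by
        gcongr
        rw [← tsum_geometric_of_lt_one hr0.le hr.2]
        exact (summable_geometric_of_lt_one hr0.le hr.2).sum_le_tsum _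
          (fun k _ => by positivity)

lemma ConvergesRLinearly.exists_abs_sub_succ_le {γ : ℕ → ℝ} {γs : ℝ}
    (h : ConvergesRLinearly γ γs) :
    ∃ C : ℝ, 0 ≤ C ∧ ∃ r ∈ Set.Ioo (0 : ℝ) 1, ∀ n, |γ (n + 1) - γ n| ≤ C * r ^ n := by
  obtain ⟨C, hC, r, hr, hs⟩ := h
  refine ⟨2 * C, by positivity, r, hr, fun n => ?_⟩
  have h₁ : |γ (n + 1) - γs| ≤ C * r ^ (n + 1) := hs (n + 1)
  have h₂ : |γs - γ n| ≤ C * r ^ n := by rw [abs_sub_comm]; exact hs n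
  have h₃ : C * r ^ (n + 1) ≤ C * r ^ n := by
    gcongr 1
    exact pow_le_pow_of_le_one hr.1.le hr.2.le n.le_succ
  have := abs_sub_le (γ (n + 1)) γs (γ n)
  linarith

lemma exists_Icc_of_tendsto_pos {γ : ℕ → ℝ} {γs : ℝ}
    (h : Filter.Tendsto γ Filter.atTop (nhds γs)) (hpos : ∀ n, 0 < γ n) (hs : 0 < γs) :
    ∃ a b : ℝ, 0 < a ∧ ∀ n, γ n ∈ Set.Icc a b := by
  obtain ⟨b, hb⟩ := h.bddAbove_range
  obtain ⟨c, hc⟩ := (h.inv₀ hs.ne').bddAbove_range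
  have hc' : ∀ n, (γ n)⁻¹ ≤ c := fun n => hc ⟨n, rfl⟩
  have hc0 : 0 < c := (inv_pos.2 (hpos 0)).trans_le (hc' 0)
  exact ⟨c⁻¹, b, inv_pos.2 hc0, fun n => ⟨inv_le_of_inv_le₀ (hpos n) (hc' n), hb ⟨n, rfl⟩⟩⟩

end RLinear

section Iteration

variable {H : Type*} [NormedAddCommGroup H] [InnerProductSpace ℝ H]

lemma IsMaximallyMonotone.mem_of_tendsto {A : H → Set H} (hA : IsMaximallyMonotone A)
    {s t : ℕ → H} {x u : H} (h : ∀ n, t n ∈ A (s n))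
    (hs : Filter.Tendsto s Filter.atTop (nhds x)) (ht : Filter.Tendsto t Filter.atTop (nhds u)) :
    u ∈ A x := by
  refine hA.mem_of_forall_inner_nonneg fun y v hv => ?_
  exact ge_of_tendsto' ((hs.sub_const y).inner (ht.sub_const v)) fun n => hA.1 (h n) hv

lemma norm_change_step_le {z g p u : H} (h : 0 ≤ ⟪z - p, g - u⟫) {a γ γ' ε : ℝ} (ha : 0 < a)
    (haγ : a ≤ γ) (hε : |γ' - γ| ≤ ε) :
    ‖z + γ' • g - (p + γ' • u)‖ ≤ (1 + ε / a) * ‖z + γ • g - (p + γ • u)‖ := by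
  have hγ : 0 < γ := ha.trans_le haγ
  have e : z + γ' • g - (p + γ' • u) = (z + γ • g - (p + γ • u)) + (γ' - γ) • (g - u) := by
    module
  have h₁ := (norm_sub_le_of_inner_nonneg h hγ.le).2
  rw [e]
  refine (norm_add_le _ _).trans ?_
  rw [add_mul, one_mul, norm_smul, Real.norm_eq_abs]
  gcongr 1
  have h₂ : a * ‖g - u‖ ≤ ‖z + γ • g - (p + γ • u)‖ := le_trans (by gcongr) h₁
  calc |γ' - γ| * ‖g - u‖ ≤ ε * ‖g - u‖ := by gcongr
    _ = ε / a * (a * ‖g - u‖) := by field_simp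
    _ ≤ _ := by
      have : 0 ≤ ε := (abs_nonneg _).trans hε
      gcongr

/-- `R`-linear convergence of the pairs `(z n, g n) ∈ gra A₁` and `(y n, h n) ∈ gra A₂` visited by
the Douglas–Rachford iteration with variable step sizes. -/
lemma exists_convergesRLinearly_of_step [CompleteSpace H] {A₁ A₂ : H → Set H} {μ ρ : ℝ}
    (hA₁ : IsMonotone A₁) (hA₂ : IsMonotone A₂)
    (hpair : ∀ p ∈ primalSol A₁ A₂, ∀ u ∈ dualSol A₁ A₂, u ∈ A₁ p ∧ -u ∈ A₂ p)
    (hP : (primalSol A₁ A₂).Nonempty)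
    (hμ : IsStronglyMonotoneRel A₁ μ (primalSol A₁ A₂) ∨
      IsStronglyMonotoneRel A₂ μ (primalSol A₁ A₂))
    (hρ : IsStronglyMonotoneRel (inv A₁) ρ (dualSol A₁ A₂) ∨
      IsStronglyMonotoneRel (inv A₂) ρ (-dualSol A₁ A₂))
    {γ : ℕ → ℝ} {γs : ℝ} (hγ : ∀ n, 0 < γ n) (hγs : 0 < γs) (hlim : ConvergesRLinearly γ γs)
    {z g y h : ℕ → H} (hg : ∀ n, g n ∈ A₁ (z n)) (hh : ∀ n, h n ∈ A₂ (y n))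
    (hgh : ∀ n, γ n • (g n + h n) = z n - y n)
    (hstep : ∀ n, z (n + 1) + γ n • g (n + 1) = y n + γ n • g n) :
    (∃ xs, ConvergesRLinearly (fun n => z n + γ n • g n) xs) ∧
      ConvergesRLinearly (fun n => z n - y n) 0 := by
  obtain ⟨a, b, ha, hab⟩ := exists_Icc_of_tendsto_pos hlim.tendsto hγ hγs
  obtain ⟨C, hC, r, hr, hΔ⟩ := hlim.exists_abs_sub_succ_le
  have hr0 := hr.1
  obtain ⟨κ, hκ, hcontr⟩ := exists_contraction_factor hA₁ hA₂ hpair hμ hρ (b := b) ha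
  have hκ0 := hκ.1
  obtain ⟨M, hM⟩ := exists_prod_one_add_geometric_le (K := C / a) (by positivity) hr
  set π : ℕ → ℝ := fun n => ∏ k ∈ Finset.range n, (1 + C / a * r ^ k) with hπ
  have hπ0 : ∀ n, 0 ≤ π n := fun n => Finset.prod_nonneg fun k _ => by positivity
  have hM0 : 0 ≤ M := (hπ0 0).trans (hM 0)
  have hπs : ∀ n, π (n + 1) = π n * (1 + C / a * r ^ n) := fun n => Finset.prod_range_succ _ _
  obtain ⟨p, hp⟩ := hP
  obtain ⟨u, hu₁, hu₂⟩ := mem_primalSol_iff.1 hp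
  have hu : u ∈ dualSol A₁ A₂ := mem_dualSol_iff.2 ⟨p, hu₁, hu₂⟩
  set e₀ := ‖z 0 + γ 0 • g 0 - (p + γ 0 • u)‖ with he₀
  have he₀0 : 0 ≤ e₀ := norm_nonneg _
  have hchange : ∀ n, ∀ q ∈ primalSol A₁ A₂, ∀ v ∈ dualSol A₁ A₂,
      ‖z (n + 1) + γ (n + 1) • g (n + 1) - (q + γ (n + 1) • v)‖ ≤
        (1 + C / a * r ^ n) * ‖y n + γ n • g n - (q + γ n • v)‖ := by
    intro n q hq v hv
    have := norm_change_step_le (hA₁ (hg (n + 1)) (hpair q hq v hv).1) ha (hab n).1 (hΔ n)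
    rwa [hstep, mul_div_right_comm] at this
  have hbdd : ∀ n, ‖z n + γ n • g n - (p + γ n • u)‖ ≤ π n * e₀ := by
    intro n
    induction n with
    | zero => simp [hπ, he₀]
    | succ n ih =>
      have h₁ := (hcontr (γ n) (hab n) _ _ _ _ (hg n) (hh n) (hgh n) p hp u hu).2.1
      refine (hchange n p hp u hu).trans ?_
      rw [hπs, mul_comm (π n), mul_assoc]
      gcongr
      exact h₁.trans ih
  have hdist : ∀ n, ∃ q ∈ primalSol A₁ A₂, ∃ v ∈ dualSol A₁ A₂,
      ‖z n + γ n • g n - (q + γ n • v)‖ ≤ π n * (e₀ * κ ^ n) := by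
    intro n
    induction n with
    | zero => exact ⟨p, hp, u, hu, by simp [hπ, he₀]⟩
    | succ n ih =>
      obtain ⟨q, hq, v, hv, hqv⟩ := ih
      obtain ⟨q', hq', v', hv', h'⟩ :=
        (hcontr (γ n) (hab n) _ _ _ _ (hg n) (hh n) (hgh n) q hq v hv).2.2
      refine ⟨q', hq', v', hv', (hchange n q' hq' v' hv').trans ?_⟩
      have e : π (n + 1) * (e₀ * κ ^ (n + 1)) =
          (1 + C / a * r ^ n) * (κ * (π n * (e₀ * κ ^ n))) := by rw [hπs, pow_succ]; ring
      rw [e]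
      gcongr
      exact h'.trans (by gcongr)
  have ht : ∀ n, ‖z n - y n‖ ≤ M * e₀ * κ ^ n := by
    intro n
    obtain ⟨q, hq, v, hv, hqv⟩ := hdist n
    refine (hcontr (γ n) (hab n) _ _ _ _ (hg n) (hh n) (hgh n) q hq v hv).1.trans
      (hqv.trans ?_)
    rw [mul_assoc]
    gcongr
    exact hM n
  have hgb : ∀ n, ‖g n‖ ≤ M * e₀ / a + ‖u‖ := by
    intro n
    have h₁ := (norm_sub_le_of_inner_nonneg (hA₁ (hg n) hu₁) (hγ n).le).2
    have h₂ : a * ‖g n - u‖ ≤ M * e₀ := by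
      calc a * ‖g n - u‖ ≤ γ n * ‖g n - u‖ := by gcongr; exact (hab n).1
        _ ≤ π n * e₀ := h₁.trans (hbdd n)
        _ ≤ M * e₀ := by gcongr; exact hM n
    have h₃ : ‖g n - u‖ ≤ M * e₀ / a := by rw [le_div_iff₀ ha]; linarith
    have h₄ := norm_add_le (g n - u) u
    rw [sub_add_cancel] at h₄
    linarith
  refine ⟨?_, M * e₀, by positivity, κ, hκ, fun n => by simpa using ht n⟩
  refine exists_convergesRLinearly_of_norm_sub_le (C₁ := M * e₀)
    (C₂ := C * (M * e₀ / a + ‖u‖)) (by positivity) (by positivity) hκ hr fun n => ?_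
  have e : z (n + 1) + γ (n + 1) • g (n + 1) - (z n + γ n • g n) =
      (γ (n + 1) - γ n) • g (n + 1) - (z n - y n) := by
    have := hstep n
    rw [← eq_sub_iff_add_eq] at this
    rw [this]
    module
  rw [e]
  refine (norm_sub_le _ _).trans ?_
  rw [norm_smul, Real.norm_eq_abs, add_comm]
  refine add_le_add (ht n) ?_
  rw [mul_right_comm]
  gcongr
  · exact hΔ n
  · exact hgb _

end Iteration

end MonOp

theorem stmt12 {H : Type*} [NormedAddCommGroup H] [InnerProductSpace ℝ H] [CompleteSpace H]
    (Γ : Set ℝ) (hΓne : Γ.Nonempty) (hΓclosed : IsClosed Γ) (hΓint : Γ.OrdConnected)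
    (hΓpos : Γ ⊆ Set.Ioi 0)
    (A₁ A₂ : H → Set H)
    (hA₁ : MonOp.IsMaximallyMonotone A₁) (hA₂ : MonOp.IsMaximallyMonotone A₂)
    (hA₁p : MonOp.IsParamonotone A₁) (hA₂p : MonOp.IsParamonotone A₂)
    (hP : (MonOp.primalSol A₁ A₂).Nonempty)
    (μ ρ : ℝ)
    (hμ : MonOp.IsStronglyMonotoneRel A₁ μ (MonOp.primalSol A₁ A₂) ∨
      MonOp.IsStronglyMonotoneRel A₂ μ (MonOp.primalSol A₁ A₂))
    (hρ : MonOp.IsStronglyMonotoneRel (MonOp.inv A₁) ρ (MonOp.dualSol A₁ A₂) ∨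
      MonOp.IsStronglyMonotoneRel (MonOp.inv A₂) ρ (-MonOp.dualSol A₁ A₂))
    (γ : ℕ → ℝ) (hγ : ∀ n, γ n ∈ Γ) (γs : ℝ) (hγs : γs ∈ Γ)
    (hγlim : MonOp.ConvergesRLinearly γ γs)
    (x z y w : ℕ → H)
    (hz0 : z 0 = MonOp.resolvent (γ 0 • A₁) (x 0))
    (hy : ∀ n, y n = MonOp.resolvent (γ n • A₂) ((2 : ℝ) • z n - x n))
    (hw : ∀ n, w n = x n - z n + y n)
    (hz : ∀ n, z (n + 1) = MonOp.resolvent (γ n • A₁) (w n))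
    (hx : ∀ n, x (n + 1) =
      (γ (n + 1) / γ n) • w n + (1 - γ (n + 1) / γ n) • z (n + 1)) :
    ∃ xs zs gs : H,
      zs = MonOp.resolvent (γs • A₁) xs ∧ gs = γs⁻¹ • (xs - zs) ∧
      (xs ∈ Function.fixedPoints (MonOp.drOp A₁ A₂ γs) ∧
        MonOp.ConvergesRLinearly x xs ∧ MonOp.ConvergesRLinearly w xs) ∧
      (zs ∈ MonOp.primalSol A₁ A₂ ∧
        MonOp.ConvergesRLinearly z zs ∧ MonOp.ConvergesRLinearly y zs) ∧
      (gs ∈ MonOp.dualSol A₁ A₂ ∧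
        MonOp.ConvergesRLinearly (fun n => (γ n)⁻¹ • (x n - z n)) gs ∧
        MonOp.ConvergesRLinearly (fun n => (γ n)⁻¹ • (w n - y n)) gs) := by
  have hγ0 : ∀ n, 0 < γ n := fun n => hΓpos (hγ n)
  have hγs0 : 0 < γs := hΓpos hγs
  have hpair := fun p hp u hu =>
    MonOp.mem_and_neg_mem_of_isParamonotone hA₁p hA₂p (p := p) (u := u) hp hu
  set g : ℕ → H := fun n => (γ n)⁻¹ • (x n - z n) with hgdef
  set h : ℕ → H := fun n => (γ n)⁻¹ • ((2 : ℝ) • z n - x n - y n) with hhdef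
  have hγg : ∀ n, γ n • g n = x n - z n := fun n => smul_inv_smul₀ (hγ0 n).ne' _
  have hxz : ∀ n, x n = z n + γ n • g n := fun n => by rw [hγg]; abel
  have hsucc : ∀ n, g (n + 1) = (γ n)⁻¹ • (w n - z (n + 1)) := by
    intro n
    have e : x (n + 1) - z (n + 1) = (γ (n + 1) / γ n) • (w n - z (n + 1)) := by
      rw [hx n]; module
    simp only [hgdef]
    rw [e, smul_smul]
    congr 1
    have := (hγ0 (n + 1)).ne'
    field_simp
  have hg : ∀ n, g n ∈ A₁ (z n) := by
    rintro (_ | n)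
    · simp only [hgdef]
      rw [hz0]
      exact hA₁.resolvent_mem (hγ0 0) _
    · rw [hsucc, hz]
      exact hA₁.resolvent_mem (hγ0 n) _
  have hh : ∀ n, h n ∈ A₂ (y n) := by
    intro n
    simp only [hhdef]
    rw [hy]
    exact hA₂.resolvent_mem (hγ0 n) _
  have hgh : ∀ n, γ n • (g n + h n) = z n - y n := by
    intro n
    rw [smul_add, hγg, smul_inv_smul₀ (hγ0 n).ne']
    module
  have hwy : ∀ n, w n = y n + γ n • g n := fun n => by rw [hw, hγg]; abel
  have hstep : ∀ n, z (n + 1) + γ n • g (n + 1) = y n + γ n • g n := by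
    intro n
    rw [hsucc, smul_inv_smul₀ (hγ0 n).ne', ← hwy]; abel
  obtain ⟨⟨xs, hxs⟩, ht⟩ := MonOp.exists_convergesRLinearly_of_step hA₁.1 hA₂.1 hpair hP hμ hρ
    hγ0 hγs0 hγlim hg hh hgh hstep
  rw [← funext hxz] at hxs
  set zs := MonOp.resolvent (γs • A₁) xs with hzs
  set gs := γs⁻¹ • (xs - zs) with hgs
  have hgsA : gs ∈ A₁ zs := hA₁.resolvent_mem hγs0 xs
  have hxsz : xs = zs + γs • gs := by rw [hgs, smul_inv_smul₀ hγs0.ne']; abel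
  obtain ⟨a, b, ha, hab⟩ := MonOp.exists_Icc_of_tendsto_pos hγlim.tendsto hγ0 hγs0
  have hdist : ∀ n, ‖z n + γ n • g n - (zs + γ n • gs)‖ ≤
      (1 + ‖gs‖) * (‖x n - xs‖ + ‖γ n - γs‖) := by
    intro n
    have e : z n + γ n • g n - (zs + γ n • gs) = (x n - xs) - (γ n - γs) • gs := by
      rw [hxz n, hxsz]; module
    rw [e]
    refine (norm_sub_le _ _).trans ?_
    rw [norm_smul]
    nlinarith [mul_nonneg (norm_nonneg gs) (norm_nonneg (x n - xs)), norm_nonneg (γ n - γs)]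
  have hfirm := fun n => MonOp.norm_sub_le_of_inner_nonneg (hA₁.1 (hg n) hgsA) (hγ0 n).le
  have hzlim : MonOp.ConvergesRLinearly z zs :=
    hxs.of_norm_le hγlim (c := 1 + ‖gs‖) (by positivity)
      fun n => (hfirm n).1.trans (hdist n)
  have hglim : MonOp.ConvergesRLinearly g gs := by
    refine hxs.of_norm_le hγlim (c := (1 + ‖gs‖) / a) (by positivity) fun n => ?_
    rw [div_mul_eq_mul_div, le_div_iff₀ ha, mul_comm]
    exact (mul_le_mul_of_nonneg_right (hab n).1 (norm_nonneg _)).trans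
      ((hfirm n).2.trans (hdist n))
  have hylim : MonOp.ConvergesRLinearly y zs := by
    refine hzlim.of_norm_le ht (c := 1) zero_le_one fun n => ?_
    have e : y n - zs = (z n - zs) - (z n - y n - 0) := by abel
    rw [e, one_mul]
    exact norm_sub_le _ _
  have hwlim : MonOp.ConvergesRLinearly w xs := by
    refine hxs.of_norm_le ht (c := 1) zero_le_one fun n => ?_
    have e : w n - xs = (x n - xs) - (z n - y n - 0) := by rw [hw]; abel
    rw [e, one_mul]
    exact norm_sub_le _ _
  have hhlim : Filter.Tendsto h Filter.atTop (nhds (-gs)) := by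
    have h₁ := ((hγlim.tendsto.inv₀ hγs0.ne').smul ht.tendsto).sub hglim.tendsto
    rw [smul_zero, zero_sub] at h₁
    refine h₁.congr fun n => ?_
    rw [← hgh, inv_smul_smul₀ (hγ0 n).ne']
    abel
  have hgsA₂ : -gs ∈ A₂ zs := hA₂.mem_of_tendsto hh hylim.tendsto hhlim
  have hwg : (fun n => (γ n)⁻¹ • (w n - y n)) = g := by
    funext n
    rw [hwy, add_sub_cancel_left, inv_smul_smul₀ (hγ0 n).ne']
  refine ⟨xs, zs, gs, rfl, rfl, ⟨?_, hxs, hwlim⟩,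
    ⟨MonOp.mem_primalSol_iff.2 ⟨gs, hgsA, hgsA₂⟩, hzlim, hylim⟩,
    ⟨MonOp.mem_dualSol_iff.2 ⟨zs, hgsA, hgsA₂⟩, hglim, hwg ▸ hglim⟩⟩
  have e : (2 : ℝ) • zs - xs = zs + γs • -gs := by rw [hxsz]; module
  rw [Function.mem_fixedPoints_iff, MonOp.drOp, ← hzs, e, hA₂.resolvent_eq hγs0 hgsA₂]
  abel
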